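/- arXiv:2010.13719 — 5 statements merged into one kernel-verified Lean document; each statement's English description precedes it below -/
import Mathlib

section
/- Let f : ℝⁿ → ℝᵐ be twice continuously differentiable, and suppose K ≥ 0 is such that for every point x and all standard basis vectors eᵢ, eⱼ of ℝⁿ, the second Fréchet derivative satisfies ‖(D²f)(x)(eᵢ, eⱼ)‖₂ ≤ K. Then for every a, h ∈ ℝⁿ, the first-order Taylor remainder satisfies ‖f(a + h) − f(a) − (Df)(a) h‖₂ ≤ (K/2) · ‖h‖₁². -/
/-- A bilinear map whose values on pairs of standard basis vectors are bounded by `K` is bounded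
by `K` with respect to the `ℓ¹` norms of its arguments. -/
theorem norm_bilinear_le_of_norm_single_le {ι F : Type*} [Fintype ι] [DecidableEq ι]
    [NormedAddCommGroup F] [NormedSpace ℝ F]
    (B : EuclideanSpace ℝ ι →L[ℝ] EuclideanSpace ℝ ι →L[ℝ] F) {K : ℝ}
    (hB : ∀ i j, ‖B (EuclideanSpace.single i 1) (EuclideanSpace.single j 1)‖ ≤ K)
    (u v : EuclideanSpace ℝ ι) :
    ‖B u v‖ ≤ K * ((∑ i, |u i|) * ∑ j, |v j|) := by
  have expand (w : EuclideanSpace ℝ ι) : w = ∑ i, w i • EuclideanSpace.single i (1 : ℝ) := by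
    simpa using ((EuclideanSpace.basisFun ι ℝ).sum_repr w).symm
  calc ‖B u v‖
      = ‖∑ j, ∑ i, v j • u i •
          B (EuclideanSpace.single i 1) (EuclideanSpace.single j 1)‖ := by
        conv_lhs => rw [expand u, expand v]
        simp only [map_sum, map_smul, sum_apply, FunLike.coe_smul, Pi.smul_apply, Finset.smul_sum]
    _ ≤ ∑ j, ∑ i, |v j| * (|u i| * K) := by
        refine norm_sum_le_of_le _ fun j _ => norm_sum_le_of_le _ fun i _ => ?_
        rw [norm_smul, norm_smul, Real.norm_eq_abs, Real.norm_eq_abs]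
        gcongr
        exact hB i j
    _ = K * ((∑ i, |u i|) * ∑ j, |v j|) := by
        simp only [← Finset.mul_sum, ← Finset.sum_mul]
        ring

/-- First-order Taylor estimate along a segment, from a bound on the second derivative in the
direction of the segment. -/
theorem norm_taylor_one_remainder_le {E F : Type*} [NormedAddCommGroup E] [NormedSpace ℝ E]
    [NormedAddCommGroup F] [NormedSpace ℝ F] {f : E → F} (hf : ContDiff ℝ 2 f) {a h : E} {C : ℝ}
    (hC : ∀ x, ‖fderiv ℝ (fderiv ℝ f) x h h‖ ≤ C) :
    ‖f (a + h) - f a - fderiv ℝ f a h‖ ≤ C / 2 := by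
  have hf' : Differentiable ℝ f := hf.differentiable (by norm_num)
  have hf'' : Differentiable ℝ (fderiv ℝ f) :=
    (hf.fderiv_right (m := 1) (by norm_num)).differentiable (by norm_num)
  have line (t : ℝ) : HasDerivAt (fun t : ℝ => a + t • h) h t := by
    simpa using ((hasDerivAt_id t).smul_const h).const_add a
  have deriv_first (t : ℝ) : HasDerivAt (fun t : ℝ => fderiv ℝ f (a + t • h) h - fderiv ℝ f a h)
      (fderiv ℝ (fderiv ℝ f) (a + t • h) h h) t := by
    have deriv_fderiv : HasDerivAt (fun t : ℝ => fderiv ℝ f (a + t • h))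
        (fderiv ℝ (fderiv ℝ f) (a + t • h) h) t :=
      (hf'' (a + t • h)).hasFDerivAt.comp_hasDerivAt t (line t)
    simpa using (deriv_fderiv.clm_apply (hasDerivAt_const t h)).sub_const (fderiv ℝ f a h)
  have deriv_remainder (t : ℝ) :
      HasDerivAt (fun t : ℝ => f (a + t • h) - f a - t • fderiv ℝ f a h)
        (fderiv ℝ f (a + t • h) h - fderiv ℝ f a h) t := by
    have deriv_f : HasDerivAt (fun t : ℝ => f (a + t • h)) (fderiv ℝ f (a + t • h) h) t :=
      (hf' (a + t • h)).hasFDerivAt.comp_hasDerivAt t (line t)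
    simpa using (deriv_f.sub_const (f a)).fun_sub
      ((hasDerivAt_id t).smul_const (fderiv ℝ f a h))
  have bound_first : ∀ t ∈ Set.Icc (0 : ℝ) 1,
      ‖fderiv ℝ f (a + t • h) h - fderiv ℝ f a h‖ ≤ C * t :=
    image_norm_le_of_norm_deriv_right_le_deriv_boundary (B := fun t => C * t) (B' := fun _ => C)
      (fun t _ => (deriv_first t).continuousAt.continuousWithinAt)
      (fun t _ => (deriv_first t).hasDerivWithinAt) (by simp)
      (fun t => by simpa using (hasDerivAt_id t).const_mul C) (fun t _ => hC _)
  have bound_remainder : ∀ t ∈ Set.Icc (0 : ℝ) 1,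
      ‖f (a + t • h) - f a - t • fderiv ℝ f a h‖ ≤ C / 2 * t ^ 2 :=
    image_norm_le_of_norm_deriv_right_le_deriv_boundary (B := fun t => C / 2 * t ^ 2)
      (B' := fun t => C * t)
      (fun t _ => (deriv_remainder t).continuousAt.continuousWithinAt)
      (fun t _ => (deriv_remainder t).hasDerivWithinAt) (by simp)
      (fun t => ((hasDerivAt_pow 2 t).const_mul (C / 2)).congr_deriv (by norm_num; ring))
      (fun t ht => bound_first t (Set.Ico_subset_Icc_self ht))
  simpa using bound_remainder 1 (by simp)

/-- **Lemma 1 (Estimation of Remainder Term), per-subsystem version.**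
If `f : ℝⁿ → ℝᵐ` is twice continuously differentiable and all second partial
derivatives are bounded by `K` in Euclidean norm, then the first-order Taylor
remainder satisfies `‖f(a+h) - f(a) - Df(a)h‖₂ ≤ (K/2)‖h‖₁²`. -/
theorem remainder_estimate
    (n m : ℕ) (f : EuclideanSpace ℝ (Fin n) → EuclideanSpace ℝ (Fin m))
    (hf : ContDiff ℝ 2 f) (K : ℝ) (hK : 0 ≤ K)
    (hbound : ∀ (x : EuclideanSpace ℝ (Fin n)) (i j : Fin n),
      ‖iteratedFDeriv ℝ 2 f x
        ![EuclideanSpace.single i (1 : ℝ), EuclideanSpace.single j (1 : ℝ)]‖ ≤ K)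
    (a h : EuclideanSpace ℝ (Fin n)) :
    ‖f (a + h) - f a - fderiv ℝ f a h‖ ≤ (K / 2) * (∑ i, |h i|) ^ 2 := by
  have hsecond (x : EuclideanSpace ℝ (Fin n)) :
      ‖fderiv ℝ (fderiv ℝ f) x h h‖ ≤ K * ((∑ i, |h i|) * ∑ i, |h i|) :=
    norm_bilinear_le_of_norm_single_le _
      (fun i j => by simpa [iteratedFDeriv_two_apply] using hbound x i j) h h
  exact (norm_taylor_one_remainder_le hf hsecond).trans_eq (by ring)
end

section
/- Let S : ℝⁿ → ℝᵐ be a linear map, b ∈ ℝᵐ, and let σ > 0, K > 0, ε > 0, Z ≥ 0 be real constants. Let â ∈ ℝⁿ (the actual attack) and a* ∈ ℝⁿ (a feasible solution) satisfy: (i) σ · ‖x‖₂ ≤ ‖S x‖₂ for all x ∈ ℝⁿ; (ii) ‖b − S â‖₂ ≤ (K/2) · (‖â‖₁ + Z)²; (iii) S a* = b; and (iv) ‖â‖₁ + Z ≤ δ, where δ := √(2εσ/K). Then ‖â − a*‖₂ ≤ ε. -/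
/-- **Lemma 2 (ε-δ-Criterion).**
If `σ‖x‖₂ ≤ ‖Sx‖₂` for all `x`, the actual attack `â` satisfies the remainder
bound `‖b - Sâ‖₂ ≤ (K/2)(‖â‖₁ + Z)²`, the computed solution `a*` is feasible
(`S a* = b`), and `‖â‖₁ + Z ≤ δ := √(2εσ/K)`, then `‖â - a*‖₂ ≤ ε`. -/
theorem eps_delta_criterion
    (n m : ℕ) (S : EuclideanSpace ℝ (Fin n) →ₗ[ℝ] EuclideanSpace ℝ (Fin m))
    (b : EuclideanSpace ℝ (Fin m)) (σ K ε Z : ℝ)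
    (hσ : 0 < σ) (hK : 0 < K) (hε : 0 < ε) (hZ : 0 ≤ Z)
    (ahat astar : EuclideanSpace ℝ (Fin n))
    (hlow : ∀ x : EuclideanSpace ℝ (Fin n), σ * ‖x‖ ≤ ‖S x‖)
    (hrem : ‖b - S ahat‖ ≤ (K / 2) * ((∑ i, |ahat i|) + Z) ^ 2)
    (hfeas : S astar = b)
    (hδ : (∑ i, |ahat i|) + Z ≤ Real.sqrt (2 * ε * σ / K)) :
    ‖ahat - astar‖ ≤ ε := by
  have hnonneg : 0 ≤ (∑ i, |ahat i|) + Z :=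
    add_nonneg (Finset.sum_nonneg fun i _ => abs_nonneg _) hZ
  have hsq : ((∑ i, |ahat i|) + Z) ^ 2 ≤ 2 * ε * σ / K :=
    (Real.le_sqrt hnonneg (by positivity)).mp hδ
  refine le_of_mul_le_mul_left ?_ hσ
  calc σ * ‖ahat - astar‖ ≤ ‖S (ahat - astar)‖ := hlow _
    _ = ‖b - S ahat‖ := by rw [map_sub, hfeas, norm_sub_rev]
    _ ≤ (K / 2) * ((∑ i, |ahat i|) + Z) ^ 2 := hrem
    _ ≤ (K / 2) * (2 * ε * σ / K) := by gcongr
    _ = σ * ε := by field_simp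
end

section
/- Let S : ℝⁿ → ℝᵐ be a linear map, b ∈ ℝᵐ, and let σ > 0, K > 0, Z ≥ 0 be real constants. Let â ∈ ℝⁿ be nonzero and let ε > 0 satisfy ε < |âᵢ| for every index i with âᵢ ≠ 0. Let a* ∈ ℝⁿ satisfy: (i) σ · ‖x‖₂ ≤ ‖S x‖₂ for all x ∈ ℝⁿ; (ii) ‖b − S â‖₂ ≤ (K/2) · (‖â‖₁ + Z)²; (iii) S a* = b; and (iv) ‖â‖₁ + Z ≤ √(2εσ/K). Then supp(â) ⊆ supp(a*), i.e. {i : âᵢ ≠ 0} ⊆ {i : a*ᵢ ≠ 0}. -/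
/-- **Theorem 1 (Correct Superset-Identification).**
Under the smallest-singular-value bound, the Taylor remainder bound, feasibility
of `a*` for the identification problem, and the smallness condition
`‖â‖₁ + Z ≤ √(2εσ/K)` with `ε < min_{i ∈ supp(â)} |âᵢ|`, every attacked
component is identified: `supp(â) ⊆ supp(a*)`. -/
theorem correct_superset_identification
    (n m : ℕ) (S : EuclideanSpace ℝ (Fin n) →ₗ[ℝ] EuclideanSpace ℝ (Fin m))
    (b : EuclideanSpace ℝ (Fin m)) (σ K Z ε : ℝ)
    (hσ : 0 < σ) (hK : 0 < K) (hZ : 0 ≤ Z)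
    (ahat astar : EuclideanSpace ℝ (Fin n))
    (hahat : ahat ≠ 0) (hε : 0 < ε)
    (hεmin : ∀ i : Fin n, ahat i ≠ 0 → ε < |ahat i|)
    (hlow : ∀ x : EuclideanSpace ℝ (Fin n), σ * ‖x‖ ≤ ‖S x‖)
    (hrem : ‖b - S ahat‖ ≤ (K / 2) * ((∑ i, |ahat i|) + Z) ^ 2)
    (hfeas : S astar = b)
    (hδ : (∑ i, |ahat i|) + Z ≤ Real.sqrt (2 * ε * σ / K)) :
    {i : Fin n | ahat i ≠ 0} ⊆ {i : Fin n | astar i ≠ 0} := by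
  intro i hi h0
  have hnonneg : 0 ≤ (∑ i, |ahat i|) + Z := by positivity
  have hsq : ((∑ i, |ahat i|) + Z) ^ 2 ≤ 2 * ε * σ / K :=
    (Real.le_sqrt hnonneg (by positivity)).1 hδ
  have hnorm : σ * ‖astar - ahat‖ ≤ σ * ε := calc
    σ * ‖astar - ahat‖ ≤ ‖b - S ahat‖ := by
      simpa only [map_sub, hfeas] using hlow (astar - ahat)
    _ ≤ K / 2 * (2 * ε * σ / K) := hrem.trans (by gcongr)
    _ = σ * ε := by field_simp
  have hcoord : |ahat i| ≤ ‖astar - ahat‖ := by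
    simpa [h0] using PiLp.norm_apply_le (astar - ahat) i
  exact absurd (hcoord.trans (le_of_mul_le_mul_left hnorm hσ)) (hεmin i hi).not_ge
end

section
/- Let S : ℝⁿ → ℝᵐ be a linear map, b ∈ ℝᵐ, and let σ > 0, K > 0, ε > 0, Z ≥ 0 be real constants. Let â, a* ∈ ℝⁿ satisfy: (i) σ · ‖x‖₂ ≤ ‖S x‖₂ for all x ∈ ℝⁿ; (ii) ‖b − S â‖₂ ≤ (K/2) · (‖â‖₁ + Z)²; (iii) ‖b − S a*‖₂ ≤ (ε/2) · σ; and (iv) ‖â‖₁ + Z ≤ δ̃, where δ̃ := √(εσ/K). Then ‖â − a*‖₂ ≤ ε. -/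
/-- **Relaxed ε-δ-criterion (first step of the proof of Theorem 2).**
If `a*` is only feasible for the relaxed identification problem
(`‖b - S a*‖₂ ≤ (ε/2)σ`) and the smallness threshold is tightened to
`δ̃ = √(εσ/K)`, then still `‖â - a*‖₂ ≤ ε`. -/
theorem relaxed_eps_delta_criterion
    (n m : ℕ) (S : EuclideanSpace ℝ (Fin n) →ₗ[ℝ] EuclideanSpace ℝ (Fin m))
    (b : EuclideanSpace ℝ (Fin m)) (σ K ε Z : ℝ)
    (hσ : 0 < σ) (hK : 0 < K) (hε : 0 < ε) (hZ : 0 ≤ Z)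
    (ahat astar : EuclideanSpace ℝ (Fin n))
    (hlow : ∀ x : EuclideanSpace ℝ (Fin n), σ * ‖x‖ ≤ ‖S x‖)
    (hrem : ‖b - S ahat‖ ≤ (K / 2) * ((∑ i, |ahat i|) + Z) ^ 2)
    (hfeas : ‖b - S astar‖ ≤ (ε / 2) * σ)
    (hδ : (∑ i, |ahat i|) + Z ≤ Real.sqrt (ε * σ / K)) :
    ‖ahat - astar‖ ≤ ε := by
  have hnonneg : 0 ≤ (∑ i, |ahat i|) + Z :=
    add_nonneg (Finset.sum_nonneg fun i _ => abs_nonneg _) hZ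
  have hsq : ((∑ i, |ahat i|) + Z) ^ 2 ≤ ε * σ / K :=
    (Real.le_sqrt hnonneg (by positivity)).mp hδ
  have hhat : ‖b - S ahat‖ ≤ (ε / 2) * σ :=
    calc ‖b - S ahat‖ ≤ (K / 2) * ((∑ i, |ahat i|) + Z) ^ 2 := hrem
      _ ≤ (K / 2) * (ε * σ / K) := by gcongr
      _ = (ε / 2) * σ := by field_simp
  have hS : ‖S (ahat - astar)‖ ≤ ‖b - S astar‖ + ‖b - S ahat‖ := by
    rw [map_sub, ← sub_sub_sub_cancel_left (S astar) (S ahat) b]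
    exact norm_sub_le _ _
  refine le_of_mul_le_mul_left ?_ hσ
  linarith [hlow (ahat - astar)]
end

section
/- Let S : ℝⁿ → ℝᵐ be a linear map, b ∈ ℝᵐ, and let σ > 0, K > 0, Z ≥ 0 be real constants. Let â ∈ ℝⁿ be nonzero and let ε > 0 satisfy ε < |âᵢ| for every index i with âᵢ ≠ 0. Suppose: (i) σ · ‖x‖₂ ≤ ‖S x‖₂ for all x ∈ ℝⁿ; (ii) ‖b − S â‖₂ ≤ (K/2) · (‖â‖₁ + Z)²; (iii) ‖â‖₁ + Z ≤ δ̃, where δ̃ := √(εσ/K). Let a* ∈ ℝⁿ be a globally optimal solution of the relaxed problem, i.e. ‖b − S a*‖₂ ≤ (ε/2)·σ, and for every a ∈ ℝⁿ with ‖b − S a‖₂ ≤ (ε/2)·σ the number of nonzero components of a* is at most the number of nonzero components of a. Then supp(a*) = supp(â), i.e. {i : a*ᵢ ≠ 0} = {i : âᵢ ≠ 0}. -/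
/-- **Theorem 2 (Exact Identification).**
If `a*` is a globally optimal solution of the relaxed identification problem
`min ‖Δa‖₀ s.t. ‖b - SΔa‖₂ ≤ (ε/2)σ`, the smallest-singular-value bound and the
Taylor remainder bound hold, and `‖â‖₁ + Z ≤ δ̃ := √(εσ/K)` with
`ε < min_{i ∈ supp(â)} |âᵢ|`, then `supp(a*) = supp(â)`. -/
theorem exact_identification
    (n m : ℕ) (S : EuclideanSpace ℝ (Fin n) →ₗ[ℝ] EuclideanSpace ℝ (Fin m))
    (b : EuclideanSpace ℝ (Fin m)) (σ K Z ε : ℝ)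
    (hσ : 0 < σ) (hK : 0 < K) (hZ : 0 ≤ Z)
    (ahat astar : EuclideanSpace ℝ (Fin n))
    (hahat : ahat ≠ 0) (hε : 0 < ε)
    (hεmin : ∀ i : Fin n, ahat i ≠ 0 → ε < |ahat i|)
    (hlow : ∀ x : EuclideanSpace ℝ (Fin n), σ * ‖x‖ ≤ ‖S x‖)
    (hrem : ‖b - S ahat‖ ≤ (K / 2) * ((∑ i, |ahat i|) + Z) ^ 2)
    (hδ : (∑ i, |ahat i|) + Z ≤ Real.sqrt (ε * σ / K))
    (hfeas : ‖b - S astar‖ ≤ (ε / 2) * σ)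
    (hopt : ∀ a : EuclideanSpace ℝ (Fin n), ‖b - S a‖ ≤ (ε / 2) * σ →
      (Finset.univ.filter (fun i : Fin n => astar i ≠ 0)).card ≤
        (Finset.univ.filter (fun i : Fin n => a i ≠ 0)).card) :
    {i : Fin n | astar i ≠ 0} = {i : Fin n | ahat i ≠ 0} := by
  have hfeas_hat : ‖b - S ahat‖ ≤ (ε / 2) * σ := by
    have hsum : 0 ≤ (∑ i, |ahat i|) + Z := by positivity
    calc ‖b - S ahat‖ ≤ (K / 2) * ((∑ i, |ahat i|) + Z) ^ 2 := hrem
      _ ≤ (K / 2) * Real.sqrt (ε * σ / K) ^ 2 := by gcongr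
      _ = (ε / 2) * σ := by
        rw [Real.sq_sqrt (by positivity)]
        field_simp
  have hdist : ‖ahat - astar‖ ≤ ε := by
    have hS : ‖S (ahat - astar)‖ ≤ ‖b - S astar‖ + ‖b - S ahat‖ := by
      rw [map_sub, ← sub_sub_sub_cancel_left (S astar) (S ahat) b]
      exact norm_sub_le _ _
    refine le_of_mul_le_mul_left ?_ hσ
    linarith [hlow (ahat - astar)]
  have hsub : Finset.univ.filter (fun i : Fin n => ahat i ≠ 0) ⊆
      Finset.univ.filter (fun i : Fin n => astar i ≠ 0) := by
    intro i hi
    simp only [Finset.mem_filter, Finset.mem_univ, true_and] at hi ⊢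
    intro hzero
    have hcoord : |ahat i| ≤ ‖ahat - astar‖ := by
      simpa [hzero] using PiLp.norm_apply_le (ahat - astar) i
    linarith [hεmin i hi]
  have heq := Finset.eq_of_subset_of_card_le hsub (hopt ahat hfeas_hat)
  ext i
  simpa using (Finset.ext_iff.mp heq i).symm
end
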